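/- On the 7-dimensional Lie algebra g with structure equations de¹ = e^{35} + e^{46}, de² = 0, de³ = e^{67}, de⁴ = e^{57}, de⁵ = e^{47}, de⁶ = e^{37}, de⁷ = 0, the 4-form ∗φ = e^{1234} + e^{1256} + e^{3456} + e^{1357} − e^{1467} − e^{2367} − e^{2457} is closed; equivalently the G₂-form φ = e^{127} + e^{347} + e^{567} + e^{246} − e^{235} − e^{136} − e^{145} is coclosed with respect to the standard metric making {e_i} orthonormal. -/

import Mathlib

open Finset BigOperators

/-- Kronecker delta as a real number. -/
def kd {n : ℕ} (a i : Fin n) : ℝ := if a = i then 1 else 0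

/-- The 2-form `e^a ∧ e^b` evaluated on basis vectors `e_i, e_j`. -/
def pairF {n : ℕ} (a b i j : Fin n) : ℝ := kd a i * kd b j - kd a j * kd b i

/-- The 3-form `e^a ∧ e^b ∧ e^c` evaluated on basis vectors. -/
def tripF {n : ℕ} (a b c i j k : Fin n) : ℝ :=
  Matrix.det !![kd a i, kd a j, kd a k; kd b i, kd b j, kd b k; kd c i, kd c j, kd c k]

/-- The 4-form `e^a ∧ e^b ∧ e^c ∧ e^d` evaluated on basis vectors. -/
def quadF {n : ℕ} (a b c d i j k l : Fin n) : ℝ :=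
  Matrix.det !![kd a i, kd a j, kd a k, kd a l;
                kd b i, kd b j, kd b k, kd b l;
                kd c i, kd c j, kd c k, kd c l;
                kd d i, kd d j, kd d k, kd d l]

/-- Chevalley–Eilenberg differential of a 2-form, on basis vectors.
`br i a b` is the coefficient of `e_i` in `[e_a, e_b]`. -/
def d2 {n : ℕ} (br : Fin n → Fin n → Fin n → ℝ) (α : Fin n → Fin n → ℝ)
    (a b c : Fin n) : ℝ :=
  -(∑ m, br m a b * α m c) + (∑ m, br m a c * α m b) - (∑ m, br m b c * α m a)

/-- Chevalley–Eilenberg differential of a 3-form, on basis vectors. -/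
def d3 {n : ℕ} (br : Fin n → Fin n → Fin n → ℝ) (α : Fin n → Fin n → Fin n → ℝ)
    (a b c d : Fin n) : ℝ :=
  -(∑ m, br m a b * α m c d) + (∑ m, br m a c * α m b d) - (∑ m, br m a d * α m b c)
  - (∑ m, br m b c * α m a d) + (∑ m, br m b d * α m a c) - (∑ m, br m c d * α m a b)

/-- Chevalley–Eilenberg differential of a 4-form, on basis vectors. -/
def d4 {n : ℕ} (br : Fin n → Fin n → Fin n → ℝ)
    (α : Fin n → Fin n → Fin n → Fin n → ℝ) (a b c d e : Fin n) : ℝ :=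
  -(∑ m, br m a b * α m c d e) + (∑ m, br m a c * α m b d e) - (∑ m, br m a d * α m b c e)
  + (∑ m, br m a e * α m b c d) - (∑ m, br m b c * α m a d e) + (∑ m, br m b d * α m a c e)
  - (∑ m, br m b e * α m a c d) - (∑ m, br m c d * α m a b e) + (∑ m, br m c e * α m a b d)
  - (∑ m, br m d e * α m a b c)

/-- Wedge product of two 2-forms, evaluated on basis vectors. -/
def w22 {n : ℕ} (α β : Fin n → Fin n → ℝ) (i j k l : Fin n) : ℝ :=
  α i j * β k l - α i k * β j l + α i l * β j k
  + α j k * β i l - α j l * β i k + α k l * β i j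

/-- Wedge product of a 2-form and a 1-form, evaluated on basis vectors. -/
def w21 {n : ℕ} (α : Fin n → Fin n → ℝ) (β : Fin n → ℝ) (i j k : Fin n) : ℝ :=
  α i j * β k - α i k * β j + α j k * β i

/-- Wedge product of a 3-form and a 1-form, evaluated on basis vectors. -/
def w31 {n : ℕ} (α : Fin n → Fin n → Fin n → ℝ) (β : Fin n → ℝ) (i j k l : Fin n) : ℝ :=
  α i j k * β l - α i j l * β k + α i k l * β j - α j k l * β i

/-- `ω = e^{12} + e^{34} + e^{56}` (0-indexed). -/
def omega6 : Fin 6 → Fin 6 → ℝ := fun i j => pairF 0 1 i j + pairF 2 3 i j + pairF 4 5 i j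

/-- `ψ₊ = e^{135} − e^{146} − e^{236} − e^{245}` (0-indexed). -/
def psi6 : Fin 6 → Fin 6 → Fin 6 → ℝ := fun i j k =>
  tripF 0 2 4 i j k - tripF 0 3 5 i j k - tripF 1 2 5 i j k - tripF 1 3 4 i j k

/-- `ω` viewed on a 7-dimensional space (indices 0..5). -/
def omega7 : Fin 7 → Fin 7 → ℝ := fun i j => pairF 0 1 i j + pairF 2 3 i j + pairF 4 5 i j

/-- `ψ₊` viewed on a 7-dimensional space. -/
def psi7 : Fin 7 → Fin 7 → Fin 7 → ℝ := fun i j k =>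
  tripF 0 2 4 i j k - tripF 0 3 5 i j k - tripF 1 2 5 i j k - tripF 1 3 4 i j k

/-- `η = e^7`, the 1-form dual to the extra direction. -/
def eta7 : Fin 7 → ℝ := kd 6

/-- The real 6×6 representation of a complex 3×3 matrix: each entry `a+bi`
becomes the 2×2 block `[[a, b], [−b, a]]`. -/
def realRep (A : Matrix (Fin 3) (Fin 3) ℂ) : Matrix (Fin 6) (Fin 6) ℝ :=
  Matrix.of fun i j =>
    let p : Fin 3 := ⟨(i : ℕ) / 2, by have := i.isLt; omega⟩
    let q : Fin 3 := ⟨(j : ℕ) / 2, by have := j.isLt; omega⟩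
    if (i : ℕ) % 2 = 0 then
      (if (j : ℕ) % 2 = 0 then (A p q).re else (A p q).im)
    else
      (if (j : ℕ) % 2 = 0 then -(A p q).im else (A p q).re)

/-- Structure constants of the semidirect sum `g = h ⊕_D ℝξ`, where `f` are the
structure constants of `h` ( `f i a b` = coefficient of `e_i` in `[e_a,e_b]` ),
`ξ = e₇` and `[ξ, U] = D U`. -/
def brg (f : Fin 6 → Fin 6 → Fin 6 → ℝ) (D : Matrix (Fin 6) (Fin 6) ℝ) :
    Fin 7 → Fin 7 → Fin 7 → ℝ := fun i a b =>
  if hi : (i : ℕ) < 6 then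
    if ha : (a : ℕ) < 6 then
      if hb : (b : ℕ) < 6 then f ⟨i, hi⟩ ⟨a, ha⟩ ⟨b, hb⟩
      else -(D ⟨i, hi⟩ ⟨a, ha⟩)
    else
      if hb : (b : ℕ) < 6 then D ⟨i, hi⟩ ⟨b, hb⟩ else 0
  else 0

/-- Structure constants of `g = (e^{35}+e^{46}, 0, e^{67}, e^{57}, e^{47}, e^{37}, 0)`. -/
def bb7 : Fin 7 → Fin 7 → Fin 7 → ℝ := fun i a b =>
  if i = 0 ∧ a = 2 ∧ b = 4 then -1
  else if i = 0 ∧ a = 3 ∧ b = 5 then -1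
  else if i = 2 ∧ a = 5 ∧ b = 6 then -1
  else if i = 3 ∧ a = 4 ∧ b = 6 then -1
  else if i = 4 ∧ a = 3 ∧ b = 6 then -1
  else if i = 5 ∧ a = 2 ∧ b = 6 then -1
  else 0

def br7 : Fin 7 → Fin 7 → Fin 7 → ℝ := fun i a b => bb7 i a b - bb7 i b a

/-- `∗φ = e^{1234}+e^{1256}+e^{3456}+e^{1357}−e^{1467}−e^{2367}−e^{2457}` (0-indexed). -/
def starphi7 : Fin 7 → Fin 7 → Fin 7 → Fin 7 → ℝ := fun i j k l =>
  quadF 0 1 2 3 i j k l + quadF 0 1 4 5 i j k l + quadF 2 3 4 5 i j k l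
    + quadF 0 2 4 6 i j k l - quadF 0 3 5 6 i j k l - quadF 1 2 5 6 i j k l
    - quadF 1 3 4 6 i j k l

/-!
Since `d` is an antiderivation, `d(e^{abcd})` is an alternating sum of products `de^a ∧ e^{bcd}`,
which the structure equations turn into monomials `e^{pqrst}`. Discarding those with a repeated
index, the summands of `∗φ` contribute (0-indexed)
`d(e^{0123}) = e^{56013} - e^{46012}`, `d(e^{0145}) = e^{36015} - e^{26014}`,
`d(e^{0246}) = e^{35246}`, `d(e^{0356}) = e^{24356}`, and the other three are closed.
Transposing the first and last index shows that the first two cancel, and commuting the two leading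
2-forms shows that the last two agree; they enter `∗φ` with opposite signs.
-/

/-- Chevalley–Eilenberg differential of a 1-form, on basis vectors, with the conventions of
`d2`, `d3` and `d4`. -/
def d1 {n : ℕ} (br : Fin n → Fin n → Fin n → ℝ) (α : Fin n → ℝ) (a b : Fin n) : ℝ :=
  -(∑ m, br m a b * α m)

/-- Wedge product of a 2-form and a 3-form, evaluated on basis vectors, with the conventions of
`w21`, `w22` and `w31`. -/
def w23 {n : ℕ} (α : Fin n → Fin n → ℝ) (β : Fin n → Fin n → Fin n → ℝ)
    (a b c d e : Fin n) : ℝ :=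
  α a b * β c d e - α a c * β b d e + α a d * β b c e - α a e * β b c d + α b c * β a d e
  - α b d * β a c e + α b e * β a c d + α c d * β a b e - α c e * β a b d + α d e * β a b c

/-- The 5-form `e^{v 0} ∧ ⋯ ∧ e^{v 4}` evaluated on basis vectors. The indices form a tuple, rather
than five arguments as in `quadF`, so that permutations can act on them. -/
def quintF {n : ℕ} (v : Fin 5 → Fin n) (p q r s t : Fin n) : ℝ :=
  Matrix.det (Matrix.of fun i j => kd (v i) (![p, q, r, s, t] j))

section BasisForms

variable {n : ℕ}

theorem sum_mul_kd (f : Fin n → ℝ) (a : Fin n) : ∑ m, f m * kd a m = f a := by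
  simp [kd]

theorem tripF_laplace (a b c i j k : Fin n) :
    tripF a b c i j k =
      kd a i * pairF b c j k - kd b i * pairF a c j k + kd c i * pairF a b j k := by
  simp only [tripF, pairF, Matrix.det_fin_three, Matrix.of_apply, Matrix.cons_val]
  ring

theorem quadF_laplace (a b c d i j k l : Fin n) :
    quadF a b c d i j k l = kd a i * tripF b c d j k l - kd b i * tripF a c d j k l
      + kd c i * tripF a b d j k l - kd d i * tripF a b c j k l := by
  have minor (x : Fin 4) :
      (!![kd a i, kd a j, kd a k, kd a l;
          kd b i, kd b j, kd b k, kd b l;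
          kd c i, kd c j, kd c k, kd c l;
          kd d i, kd d j, kd d k, kd d l].submatrix x.succAbove Fin.succ).det =
        ![tripF b c d j k l, tripF a c d j k l, tripF a b d j k l, tripF a b c j k l] x := by
    fin_cases x <;> exact congrArg Matrix.det (by ext y z; fin_cases y <;> fin_cases z <;> rfl)
  rw [quadF, Matrix.det_succ_column_zero, Fin.sum_univ_four]
  simp only [minor, Matrix.of_apply, Matrix.cons_val, Fin.coe_ofNat_eq_mod]
  ring

theorem quintF_laplace (a b c d e p q r s t : Fin n) :
    quintF ![a, b, c, d, e] p q r s t = kd a p * quadF b c d e q r s t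
      - kd b p * quadF a c d e q r s t + kd c p * quadF a b d e q r s t
      - kd d p * quadF a b c e q r s t + kd e p * quadF a b c d q r s t := by
  have minor (i : Fin 5) :
      ((Matrix.of fun x y => kd (![a, b, c, d, e] x) (![p, q, r, s, t] y)).submatrix
        i.succAbove Fin.succ).det =
      ![quadF b c d e q r s t, quadF a c d e q r s t, quadF a b d e q r s t,
        quadF a b c e q r s t, quadF a b c d q r s t] i := by
    fin_cases i <;> exact congrArg Matrix.det (by ext y z; fin_cases y <;> fin_cases z <;> rfl)
  rw [quintF, Matrix.det_succ_column_zero, Fin.sum_univ_five]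
  simp only [minor, Matrix.of_apply, Matrix.cons_val, Fin.coe_ofNat_eq_mod]
  ring

theorem sum_mul_quadF (f : Fin n → ℝ) (a b c d j k l : Fin n) :
    ∑ m, f m * quadF a b c d m j k l = f a * tripF b c d j k l - f b * tripF a c d j k l
      + f c * tripF a b d j k l - f d * tripF a b c j k l := by
  simp only [quadF_laplace, mul_add, mul_sub, ← mul_assoc, sum_add_distrib,
    sum_sub_distrib, ← sum_mul, sum_mul_kd]

section Differential

variable (br : Fin n → Fin n → Fin n → ℝ)

theorem d1_kd (a i j : Fin n) :
    d1 br (kd a) i j = -br a i j := by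
  rw [d1, sum_mul_kd (br · i j)]

theorem d4_quadF (a b c d : Fin n) :
    d4 br (quadF a b c d) = w23 (d1 br (kd a)) (tripF b c d) - w23 (d1 br (kd b)) (tripF a c d)
      + w23 (d1 br (kd c)) (tripF a b d) - w23 (d1 br (kd d)) (tripF a b c) := by
  funext p q r s t
  simp only [d4, w23, Pi.add_apply, Pi.sub_apply, d1_kd, sum_mul_quadF (br · _ _)]
  ring

theorem d4_add (α β : Fin n → Fin n → Fin n → Fin n → ℝ) :
    d4 br (α + β) = d4 br α + d4 br β := by
  funext a b c d e
  simp only [d4, Pi.add_apply, mul_add, sum_add_distrib]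
  ring

theorem d4_sub (α β : Fin n → Fin n → Fin n → Fin n → ℝ) :
    d4 br (α - β) = d4 br α - d4 br β := by
  funext a b c d e
  simp only [d4, Pi.sub_apply, mul_sub, sum_sub_distrib]
  ring

end Differential

theorem w23_add_left (α β : Fin n → Fin n → ℝ) (γ : Fin n → Fin n → Fin n → ℝ) :
    w23 (α + β) γ = w23 α γ + w23 β γ := by
  funext a b c d e
  simp only [w23, Pi.add_apply]
  ring

theorem w23_zero_left (γ : Fin n → Fin n → Fin n → ℝ) : w23 0 γ = 0 := by
  funext a b c d e
  simp [w23]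

theorem w23_pairF_tripF (a b c d e : Fin n) :
    w23 (pairF a b) (tripF c d e) = quintF ![a, b, c, d, e] := by
  funext p q r s t
  simp only [quintF_laplace, quadF_laplace, tripF_laplace, w23, pairF]
  ring

theorem quintF_eq_zero_of_not_injective {v : Fin 5 → Fin n} (hv : ¬ Function.Injective v) :
    quintF v = 0 := by
  obtain ⟨i, j, hij, hne⟩ := Function.not_injective_iff.mp hv
  funext p q r s t
  exact Matrix.det_zero_of_row_eq hne (by ext; simp [hij])

theorem quintF_comp_perm (v : Fin 5 → Fin n) (σ : Equiv.Perm (Fin 5)) :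
    quintF (v ∘ σ) = (Equiv.Perm.sign σ : ℝ) • quintF v := by
  funext p q r s t
  exact Matrix.det_permute σ (Matrix.of fun i j => kd (v i) (![p, q, r, s, t] j))

theorem quintF_swap_first_last (a b c d e : Fin n) :
    quintF ![e, b, c, d, a] = -quintF ![a, b, c, d, e] := by
  have hperm : ![e, b, c, d, a] = ![a, b, c, d, e] ∘ Equiv.swap 0 4 := by
    funext i
    fin_cases i <;> rfl
  rw [hperm, quintF_comp_perm, Equiv.Perm.sign_swap (by decide)]
  simp

theorem quintF_swap_leading_pairs (a b c d e : Fin n) :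
    quintF ![c, d, a, b, e] = quintF ![a, b, c, d, e] := by
  have hperm : ![c, d, a, b, e] =
      ![a, b, c, d, e] ∘ (Equiv.swap 0 2 * Equiv.swap 1 3 : Equiv.Perm (Fin 5)) := by
    funext i
    fin_cases i <;> rfl
  rw [hperm, quintF_comp_perm, Equiv.Perm.sign_mul, Equiv.Perm.sign_swap (by decide),
    Equiv.Perm.sign_swap (by decide)]
  simp

end BasisForms

theorem d1_br7_kd (i : Fin 7) :
    d1 br7 (kd i) =
      ![pairF 2 4 + pairF 3 5, 0, pairF 5 6, pairF 4 6, pairF 3 6, pairF 2 6, 0] i := by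
  funext a b
  rw [d1_kd]
  fin_cases i <;> simp [br7, bb7, pairF, kd] <;> grind

theorem d4_br7_quadF_0123 :
    d4 br7 (quadF 0 1 2 3) = quintF ![5, 6, 0, 1, 3] - quintF ![4, 6, 0, 1, 2] := by
  simp (disch := decide) [d4_quadF, d1_br7_kd, w23_add_left, w23_zero_left, w23_pairF_tripF,
    quintF_eq_zero_of_not_injective]

theorem d4_br7_quadF_0145 :
    d4 br7 (quadF 0 1 4 5) = quintF ![3, 6, 0, 1, 5] - quintF ![2, 6, 0, 1, 4] := by
  simp (disch := decide) [d4_quadF, d1_br7_kd, w23_add_left, w23_zero_left, w23_pairF_tripF,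
    quintF_eq_zero_of_not_injective]

theorem d4_br7_quadF_2345 : d4 br7 (quadF 2 3 4 5) = 0 := by
  simp (disch := decide) [d4_quadF, d1_br7_kd, w23_pairF_tripF, quintF_eq_zero_of_not_injective]

theorem d4_br7_quadF_0246 : d4 br7 (quadF 0 2 4 6) = quintF ![3, 5, 2, 4, 6] := by
  simp (disch := decide) [d4_quadF, d1_br7_kd, w23_add_left, w23_zero_left, w23_pairF_tripF,
    quintF_eq_zero_of_not_injective]

theorem d4_br7_quadF_0356 : d4 br7 (quadF 0 3 5 6) = quintF ![2, 4, 3, 5, 6] := by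
  simp (disch := decide) [d4_quadF, d1_br7_kd, w23_add_left, w23_zero_left, w23_pairF_tripF,
    quintF_eq_zero_of_not_injective]

theorem d4_br7_quadF_1256 : d4 br7 (quadF 1 2 5 6) = 0 := by
  simp (disch := decide) [d4_quadF, d1_br7_kd, w23_zero_left, w23_pairF_tripF,
    quintF_eq_zero_of_not_injective]

theorem d4_br7_quadF_1346 : d4 br7 (quadF 1 3 4 6) = 0 := by
  simp (disch := decide) [d4_quadF, d1_br7_kd, w23_zero_left, w23_pairF_tripF,
    quintF_eq_zero_of_not_injective]

theorem starphi7_eq_quadF_sum :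
    starphi7 = quadF 0 1 2 3 + quadF 0 1 4 5 + quadF 2 3 4 5
      + quadF 0 2 4 6 - quadF 0 3 5 6 - quadF 1 2 5 6 - quadF 1 3 4 6 := by
  unfold starphi7
  rfl

/-- `d(∗φ) = 0`, i.e. the G₂-form `φ` is coclosed. -/
theorem stmt_7 : ∀ a b c d e : Fin 7, d4 br7 starphi7 a b c d e = 0 := by
  suffices closed : d4 br7 starphi7 = 0 by
    intro a b c d e
    rw [closed]
    rfl
  calc
    d4 br7 starphi7 = quintF ![5, 6, 0, 1, 3] - quintF ![4, 6, 0, 1, 2]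
        + (quintF ![3, 6, 0, 1, 5] - quintF ![2, 6, 0, 1, 4])
        + quintF ![3, 5, 2, 4, 6] - quintF ![2, 4, 3, 5, 6] := by
      simp only [starphi7_eq_quadF_sum, d4_add, d4_sub, d4_br7_quadF_0123, d4_br7_quadF_0145,
        d4_br7_quadF_2345, d4_br7_quadF_0246, d4_br7_quadF_0356, d4_br7_quadF_1256,
        d4_br7_quadF_1346, add_zero, sub_zero]
    _ = 0 := by
      rw [quintF_swap_first_last 5, quintF_swap_first_last 4, quintF_swap_leading_pairs 3]
      abel
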